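/- For 0 < q < 1, functions f, g : \mathbb{R} \to \mathbb{R}, and n a nonnegative integer, the q-Leibniz rule holds: D_q^n (f \cdot g)(x) = \sum_{k=0}^{n} \binom{n}{k}_q (D_q^{n-k} f)(q^k x) (D_q^k g)(x). -/

import Mathlib

/-- The q-Pochhammer symbol `(a; q)_n`. -/
noncomputable def qPoch (a q : ℝ) (n : ℕ) : ℝ :=
  ∏ j ∈ Finset.range n, (1 - a * q ^ j)

/-- The Gaussian binomial coefficient. -/
noncomputable def qBinom (q : ℝ) (n k : ℕ) : ℝ :=
  qPoch q q n / (qPoch q q (n - k) * qPoch q q k)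

/-- The q-derivative. -/
noncomputable def Dq (q : ℝ) (f : ℝ → ℝ) : ℝ → ℝ :=
  fun x => (f (q * x) - f x) / ((q - 1) * x)

theorem qPoch_succ_aux (q : ℝ) (n : ℕ) :
    qPoch q q (n + 1) = qPoch q q n * (1 - q ^ (n + 1)) := by
  unfold qPoch
  rw [Finset.prod_range_succ, pow_succ' q n]

theorem one_sub_pow_ne_aux (q : ℝ) (hq0 : 0 < q) (hq1 : q < 1) (n : ℕ) :
    1 - q ^ (n + 1) ≠ 0 := by
  have := pow_lt_one₀ hq0.le hq1 (Nat.succ_ne_zero n)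
  exact (sub_pos.mpr this).ne'

theorem qPoch_ne_aux (q : ℝ) (hq0 : 0 < q) (hq1 : q < 1) (n : ℕ) : qPoch q q n ≠ 0 := by
  induction n with
  | zero => simp [qPoch]
  | succ n ih =>
    rw [qPoch_succ_aux]
    exact mul_ne_zero ih (one_sub_pow_ne_aux q hq0 hq1 n)

theorem qBinom_zero_aux (q : ℝ) (hq0 : 0 < q) (hq1 : q < 1) (n : ℕ) : qBinom q n 0 = 1 := by
  have := qPoch_ne_aux q hq0 hq1 n
  have h0 : qPoch q q 0 = 1 := by simp [qPoch]
  simp [qBinom, h0, this]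

theorem qBinom_self_aux (q : ℝ) (hq0 : 0 < q) (hq1 : q < 1) (n : ℕ) : qBinom q n n = 1 := by
  have := qPoch_ne_aux q hq0 hq1 n
  have h0 : qPoch q q 0 = 1 := by simp [qPoch]
  simp [qBinom, h0, this]

theorem qBinom_pascal_aux (q : ℝ) (hq0 : 0 < q) (hq1 : q < 1) (n k : ℕ) (hk : k < n) :
    qBinom q (n + 1) (k + 1) = qBinom q n k + q ^ (k + 1) * qBinom q n (k + 1) := by
  obtain ⟨m, rfl⟩ : ∃ m, n = k + 1 + m := ⟨n - (k + 1), by omega⟩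
  unfold qBinom
  have e1 : k + 1 + m + 1 - (k + 1) = m + 1 := by omega
  have e2 : k + 1 + m - k = m + 1 := by omega
  have e3 : k + 1 + m - (k + 1) = m := by omega
  rw [e1, e2, e3, qPoch_succ_aux q (k + 1 + m), qPoch_succ_aux q m, qPoch_succ_aux q k]
  have h1 := qPoch_ne_aux q hq0 hq1 m
  have h2 := qPoch_ne_aux q hq0 hq1 k
  have h3 := one_sub_pow_ne_aux q hq0 hq1 m
  have h4 := one_sub_pow_ne_aux q hq0 hq1 k
  generalize qPoch q q (k + 1 + m) = P
  have e : q ^ (k + 1 + m + 1) = q ^ (k + 1) * q ^ (m + 1) := by rw [← pow_add]; rfl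
  rw [e]
  generalize q ^ (k + 1) = a at *
  generalize q ^ (m + 1) = b at *
  field_simp
  ring

theorem Dq_mul_aux (q : ℝ) (hq0 : 0 < q) (hq1 : q < 1) (F G : ℝ → ℝ) (x : ℝ) (hx : x ≠ 0)
    (k : ℕ) :
    (F (q ^ k * (q * x)) * G (q * x) - F (q ^ k * x) * G x) / ((q - 1) * x) =
      F (q ^ (k + 1) * x) * Dq q G x + q ^ k * (Dq q F (q ^ k * x) * G x) := by
  have h1 : q - 1 ≠ 0 := (sub_neg.mpr hq1).ne
  have h2 : q ^ k ≠ 0 := (pow_pos hq0 k).ne'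
  unfold Dq
  have e1 : q ^ k * (q * x) = q ^ (k + 1) * x := by ring
  have e2 : q * (q ^ k * x) = q ^ (k + 1) * x := by ring
  rw [e1, e2]
  generalize F (q ^ (k + 1) * x) = u
  generalize F (q ^ k * x) = v
  field_simp
  ring

/-- The q-Leibniz rule:
`D_q^n (fg)(x) = ∑_{k=0}^n [n k]_q (D_q^{n-k} f)(q^k x) (D_q^k g)(x)`. -/
theorem q_leibniz_rule (q : ℝ) (hq0 : 0 < q) (hq1 : q < 1)
    (f g : ℝ → ℝ) (x : ℝ) (hx : x ≠ 0) (n : ℕ) :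
    (Dq q)^[n] (fun y => f y * g y) x =
      ∑ k ∈ Finset.range (n + 1),
        qBinom q n k * (Dq q)^[n - k] f (q ^ k * x) * (Dq q)^[k] g x := by
  induction n generalizing x with
  | zero => simp [qBinom_zero_aux q hq0 hq1]
  | succ n ih =>
    rw [Function.iterate_succ_apply']
    have hqx : q * x ≠ 0 := mul_ne_zero hq0.ne' hx
    have step : Dq q ((Dq q)^[n] (fun y => f y * g y)) x =
        ∑ k ∈ Finset.range (n + 1), (qBinom q n k *
          ((Dq q)^[n - k] f (q ^ (k + 1) * x) * (Dq q)^[k + 1] g x) +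
          q ^ k * qBinom q n k *
            ((Dq q)^[n + 1 - k] f (q ^ k * x) * (Dq q)^[k] g x)) := by
      conv_lhs => unfold Dq
      change ((Dq q)^[n] (fun y => f y * g y) (q * x) -
        (Dq q)^[n] (fun y => f y * g y) x) / ((q - 1) * x) = _
      rw [ih x hx, ih (q * x) hqx, ← Finset.sum_sub_distrib, Finset.sum_div]
      refine Finset.sum_congr rfl fun k hk => ?_
      have hk' : n + 1 - k = (n - k) + 1 := by
        have := Finset.mem_range.mp hk
        omega
      have := Dq_mul_aux q hq0 hq1 ((Dq q)^[n - k] f) ((Dq q)^[k] g) x hx k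
      rw [hk', Function.iterate_succ_apply', Function.iterate_succ_apply']
      linear_combination qBinom q n k * this
    rw [step, Finset.sum_add_distrib, Finset.sum_range_succ,
      Finset.sum_range_succ' (fun k => q ^ k * qBinom q n k *
            ((Dq q)^[n + 1 - k] f (q ^ k * x) * (Dq q)^[k] g x)),
      Finset.sum_range_succ _ (n + 1), Finset.sum_range_succ' _ n]
    have key : ∑ k ∈ Finset.range n, qBinom q (n + 1) (k + 1) *
          (Dq q)^[n + 1 - (k + 1)] f (q ^ (k + 1) * x) * (Dq q)^[k + 1] g x =
        ∑ k ∈ Finset.range n, qBinom q n k *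
          ((Dq q)^[n - k] f (q ^ (k + 1) * x) * (Dq q)^[k + 1] g x) +
        ∑ k ∈ Finset.range n, q ^ (k + 1) * qBinom q n (k + 1) *
          ((Dq q)^[n + 1 - (k + 1)] f (q ^ (k + 1) * x) * (Dq q)^[k + 1] g x) := by
      rw [← Finset.sum_add_distrib]
      refine Finset.sum_congr rfl fun k hk => ?_
      rw [qBinom_pascal_aux q hq0 hq1 n k (Finset.mem_range.mp hk), Nat.add_sub_add_right]
      ring
    rw [key]
    simp only [qBinom_zero_aux q hq0 hq1, qBinom_self_aux q hq0 hq1, Nat.sub_self, pow_zero]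
    ring
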